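/- Suppose ψ : (0,∞) → ℂ is continuously differentiable with compact support in (0,∞). Then for all R > 0, A ≥ 0, and κ ∈ ℝ, |κ ∫_0^R ψ(ρ) e^{±iAρ} ρ^{-1+iκ} dρ| ≤ C(1+|κ|)² (‖ψ'‖_{L¹} + ‖ψ‖_{L^∞}), where C is the absolute constant from the unweighted estimate |κ ∫_ε^R e^{±iAρ} ρ^{-1+iκ} dρ| ≤ C(1+|κ|)². -/

import Mathlib

open MeasureTheory Complex

/-!
By integration by parts against a primitive of the remaining factor, an amplitude `φ` costs only a
factor `‖φ(b)‖ + ‖φ'‖_{L¹}`. This is applied three times. On `ρ ≤ 1/|B|` the amplitude is the slowly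
varying `e^{iBρ}` and `ρ^{-1+iκ}` is integrated exactly; on `ρ ≥ 1/|B|` the roles are exchanged. The
two ranges together bound every primitive of `e^{iBρ} ρ^{-1+iκ}`, and the third amplitude is `ψ`.
-/

section Amplitude

variable {𝕜 E : Type*} [NontriviallyNormedField 𝕜] [NormedAlgebra ℝ 𝕜] [NormedAddCommGroup E]
  [NormedSpace 𝕜 E] [NormedSpace ℝ E] [IsScalarTower ℝ 𝕜 E] [CompleteSpace E]
  {φ φ' : ℝ → 𝕜} {g : ℝ → E} {a b M : ℝ}

theorem norm_intervalIntegral_smul_le_of_norm_primitive_le (hab : a ≤ b)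
    (hφ : ContinuousOn φ (Set.Icc a b)) (hφ' : ∀ x ∈ Set.Ioo a b, HasDerivAt φ (φ' x) x)
    (hφ'_int : IntervalIntegrable φ' volume a b) (hg : ContinuousOn g (Set.Icc a b))
    (hM : ∀ x ∈ Set.Icc a b, ‖∫ t in a..x, g t‖ ≤ M) :
    ‖∫ x in a..b, φ x • g x‖ ≤ M * (‖φ b‖ + ∫ x in a..b, ‖φ' x‖) := by
  rw [← Set.uIcc_of_le hab] at hφ
  have hg_int : IntervalIntegrable g volume a b := hg.intervalIntegrable_of_Icc hab
  have hprim : ∀ x ∈ Set.Ioo a b, HasDerivAt (fun r => ∫ t in a..r, g t) (g x) x := by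
    intro x hx
    exact intervalIntegral.integral_hasDerivAt_right
      ((hg.mono (Set.Icc_subset_Icc_right hx.2.le)).intervalIntegrable_of_Icc hx.1.le)
      ((hg.mono Set.Ioo_subset_Icc_self).stronglyMeasurableAtFilter isOpen_Ioo x hx)
      (hg.continuousAt (Icc_mem_nhds hx.1 hx.2))
  have hparts : ∫ x in a..b, φ x • g x =
      φ b • (∫ t in a..b, g t) - ∫ x in a..b, φ' x • ∫ t in a..x, g t := by
    have h := intervalIntegral.integral_smul_deriv_eq_deriv_smul_of_hasDerivAt hφ
      (intervalIntegral.continuousOn_primitive_interval' hg_int Set.left_mem_uIcc)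
      (by simpa only [min_eq_left hab, max_eq_right hab] using hφ')
      (by simpa only [min_eq_left hab, max_eq_right hab] using hprim) hφ'_int hg_int
    rwa [intervalIntegral.integral_same, smul_zero, sub_zero] at h
  have hboundary : ‖φ b • ∫ t in a..b, g t‖ ≤ M * ‖φ b‖ := by
    rw [norm_smul, mul_comm]
    gcongr
    exact hM b (Set.right_mem_Icc.2 hab)
  have hremainder : ‖∫ x in a..b, φ' x • ∫ t in a..x, g t‖ ≤ M * ∫ x in a..b, ‖φ' x‖ := by
    rw [← intervalIntegral.integral_const_mul]
    refine intervalIntegral.norm_integral_le_of_norm_le hab (.of_forall fun x hx => ?_)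
      (hφ'_int.norm.const_mul M)
    rw [norm_smul, mul_comm]
    gcongr
    exact hM x (Set.Ioc_subset_Icc_self hx)
  rw [hparts, mul_add]
  exact (norm_sub_le _ _).trans (add_le_add hboundary hremainder)

theorem norm_intervalIntegral_smul_le_of_forall_Ioc (hab : a < b)
    (hφ : ContinuousOn φ (Set.Ioc a b)) (hφ' : ∀ x ∈ Set.Ioo a b, HasDerivAt φ (φ' x) x)
    (hφ'_int : IntervalIntegrable φ' volume a b) (hg : ContinuousOn g (Set.Ioc a b))
    (hφg : IntervalIntegrable (fun x => φ x • g x) volume a b)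
    (hM : ∀ c d, a < c → c ≤ d → d ≤ b → ‖∫ t in c..d, g t‖ ≤ M) :
    ‖∫ x in a..b, φ x • g x‖ ≤ M * (‖φ b‖ + ∫ x in a..b, ‖φ' x‖) := by
  have hM0 : 0 ≤ M := (norm_nonneg _).trans (hM b b hab le_rfl le_rfl)
  have htruncated : ∀ c ∈ Set.Ioc a b,
      ‖∫ x in c..b, φ x • g x‖ ≤ M * (‖φ b‖ + ∫ x in a..b, ‖φ' x‖) := by
    rintro c ⟨hac, hcb⟩
    have hsub : Set.Icc c b ⊆ Set.Ioc a b := Set.Icc_subset_Ioc hac le_rfl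
    have h := norm_intervalIntegral_smul_le_of_norm_primitive_le hcb (hφ.mono hsub)
      (fun x hx => hφ' x ⟨hac.trans hx.1, hx.2⟩)
      (hφ'_int.mono_set (Set.uIcc_subset_uIcc_right (Set.Icc_subset_uIcc ⟨hac.le, hcb⟩)))
      (hg.mono hsub) (fun x hx => hM c x hac hx.1 hx.2)
    refine h.trans ?_
    gcongr
    exact intervalIntegral.integral_mono_interval hac.le hcb le_rfl
      (.of_forall fun x => norm_nonneg _) hφ'_int.norm
  have hlim : Filter.Tendsto (fun c => ∫ x in c..b, φ x • g x) (nhdsWithin a (Set.Ioc a b))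
      (nhds (∫ x in a..b, φ x • g x)) := by
    have h := intervalIntegral.continuousOn_primitive_interval_left
      ((intervalIntegrable_iff').1 hφg) a Set.left_mem_uIcc
    rw [Set.uIcc_of_le hab.le] at h
    exact h.mono_left (nhdsWithin_mono _ Set.Ioc_subset_Icc_self)
  have : (nhdsWithin a (Set.Ioc a b)).NeBot := by
    rw [nhdsWithin_Ioc_eq_nhdsGT hab]
    infer_instance
  exact le_of_tendsto hlim.norm (eventually_mem_nhdsWithin.mono htruncated)

end Amplitude

theorem norm_exp_I_mul_ofReal_eq_one (x : ℝ) : ‖exp (I * (x : ℂ))‖ = 1 := by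
  rw [mul_comm, norm_exp_ofReal_mul_I]

theorem norm_intervalIntegral_exp_I_mul_le {B : ℝ} (hB : B ≠ 0) (a b : ℝ) :
    ‖∫ ρ in a..b, exp (I * Complex.ofReal (B * ρ))‖ ≤ 2 / |B| := by
  have hcast : ∀ ρ : ℝ, I * Complex.ofReal (B * ρ) = (I * B) * ρ := fun ρ => by push_cast; ring
  have hnorm : ∀ ρ : ℝ, ‖exp (I * B * ρ)‖ = 1 := fun ρ => by
    rw [← hcast, norm_exp_I_mul_ofReal_eq_one]
  simp only [hcast]
  rw [integral_exp_mul_complex (by simp [hB]), norm_div, norm_mul, norm_I, one_mul, norm_real,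
    Real.norm_eq_abs]
  gcongr
  refine (norm_sub_le _ _).trans ?_
  rw [hnorm, hnorm]
  norm_num

theorem norm_intervalIntegral_mul_cpow_neg_one_add_le (κ : ℝ) {a b : ℝ} (ha : 0 < a)
    (hab : a ≤ b) : ‖∫ ρ in a..b, (κ : ℂ) * (ρ : ℂ) ^ (-1 + I * (κ : ℂ))‖ ≤ 2 := by
  rcases eq_or_ne κ 0 with rfl | hκ
  · simp
  have hunit : ∀ x : ℝ, 0 < x → ‖(x : ℂ) ^ (I * (κ : ℂ))‖ = 1 := fun x hx => by
    simp [norm_cpow_eq_rpow_re_of_pos hx]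
  have hne : -1 + I * (κ : ℂ) ≠ -1 := by simp [hκ]
  rw [intervalIntegral.integral_const_mul,
    integral_cpow (Or.inr ⟨hne, Set.notMem_uIcc_of_lt ha (ha.trans_le hab)⟩),
    neg_add_cancel_comm, norm_mul, norm_div, norm_mul, norm_I, one_mul,
    mul_div_cancel₀ _ (by simpa using hκ)]
  refine (norm_sub_le _ _).trans ?_
  rw [hunit b (ha.trans_le hab), hunit a ha]
  norm_num

/-- The kernel `e^{iBρ} ρ^{-1+iκ}`. Both signs of the phase `±Aρ` are covered by `B : ℝ`. -/
noncomputable def oscillatoryKernel (B κ ρ : ℝ) : ℂ :=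
  exp (I * Complex.ofReal (B * ρ)) * (ρ : ℂ) ^ (-1 + I * (κ : ℂ))

theorem continuousOn_ofReal_cpow_Ioi (z : ℂ) :
    ContinuousOn (fun ρ : ℝ => (ρ : ℂ) ^ z) (Set.Ioi 0) := fun x hx =>
  (continuousAt_ofReal_cpow_const x z (Or.inr (ne_of_gt hx))).continuousWithinAt

theorem continuousOn_oscillatoryKernel (B κ : ℝ) :
    ContinuousOn (oscillatoryKernel B κ) (Set.Ioi 0) :=
  ContinuousOn.mul (by fun_prop) (continuousOn_ofReal_cpow_Ioi _)

theorem norm_mul_integral_oscillatoryKernel_le_one_add (B κ : ℝ) {a b : ℝ} (ha : 0 < a)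
    (hab : a ≤ b) :
    ‖(κ : ℂ) * ∫ ρ in a..b, oscillatoryKernel B κ ρ‖ ≤ 2 * (1 + |B| * (b - a)) := by
  have hphase : ∀ x : ℝ, HasDerivAt (fun ρ : ℝ => exp (I * Complex.ofReal (B * ρ)))
      (exp (I * Complex.ofReal (B * x)) * (I * B)) x := fun x => by
    have h : HasDerivAt (fun ρ : ℝ => I * Complex.ofReal (B * ρ)) (I * B) x := by
      simpa using (((hasDerivAt_id x).const_mul B).ofReal_comp).const_mul I
    exact h.cexp
  have hpow : ContinuousOn (fun ρ : ℝ => (κ : ℂ) * (ρ : ℂ) ^ (-1 + I * (κ : ℂ))) (Set.Icc a b) :=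
    continuousOn_const.mul ((continuousOn_ofReal_cpow_Ioi _).mono fun x hx => ha.trans_le hx.1)
  have h := norm_intervalIntegral_smul_le_of_norm_primitive_le hab
    (by fun_prop) (fun x _ => hphase x)
    (Continuous.intervalIntegrable (by fun_prop) a b) hpow
    (fun x hx => norm_intervalIntegral_mul_cpow_neg_one_add_le κ ha hx.1)
  simp only [norm_mul, norm_exp_I_mul_ofReal_eq_one, norm_I, norm_real, Real.norm_eq_abs, one_mul,
    intervalIntegral.integral_const, smul_eq_mul, mul_comm (b - a)] at h
  simpa only [oscillatoryKernel, ← intervalIntegral.integral_const_mul,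
    mul_left_comm (κ : ℂ)] using h

-- `b⁻¹` is the modulus of `ρ^{-1+iκ}` at `b`, and the integrand is that of its derivative.
theorem inv_add_integral_norm_mul_cpow_le (κ : ℝ) {a b : ℝ} (ha : 0 < a) (hab : a ≤ b) :
    b⁻¹ + ∫ ρ in a..b, ‖(-1 + I * (κ : ℂ)) * (ρ : ℂ) ^ (-1 + I * (κ : ℂ) - 1)‖ ≤
      (1 + |κ|) / a := by
  have hb : 0 < b := ha.trans_le hab
  have hexponent : ‖-1 + I * (κ : ℂ)‖ ≤ 1 + |κ| := (norm_add_le _ _).trans (by simp)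
  have hcpow : Set.EqOn (fun ρ : ℝ => ‖(ρ : ℂ) ^ (-1 + I * (κ : ℂ) - 1)‖)
      (fun ρ => ρ ^ (-2 : ℤ)) (Set.uIcc a b) := fun ρ hρ => by
    rw [Set.uIcc_of_le hab] at hρ
    beta_reduce
    rw [norm_cpow_eq_rpow_re_of_pos (ha.trans_le hρ.1), ← Real.rpow_intCast]
    norm_num
  have hintegral : ∫ ρ in a..b, ρ ^ (-2 : ℤ) = a⁻¹ - b⁻¹ := by
    rw [integral_zpow (Or.inr ⟨by norm_num, Set.notMem_uIcc_of_lt ha hb⟩),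
      show (-2 : ℤ) + 1 = -1 from rfl, zpow_neg_one, zpow_neg_one]
    push_cast
    ring
  have hdiff : 0 ≤ a⁻¹ - b⁻¹ := sub_nonneg.2 (inv_anti₀ ha hab)
  simp only [norm_mul]
  rw [intervalIntegral.integral_const_mul, intervalIntegral.integral_congr hcpow, hintegral]
  calc b⁻¹ + ‖-1 + I * (κ : ℂ)‖ * (a⁻¹ - b⁻¹)
      ≤ b⁻¹ + (1 + |κ|) * (a⁻¹ - b⁻¹) := by gcongr
    _ = (1 + |κ|) / a - |κ| * b⁻¹ := by ring
    _ ≤ (1 + |κ|) / a := sub_le_self _ (by positivity)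

theorem norm_integral_oscillatoryKernel_le_div {B : ℝ} (hB : B ≠ 0) (κ : ℝ) {a b : ℝ}
    (ha : 0 < a) (hab : a ≤ b) :
    ‖∫ ρ in a..b, oscillatoryKernel B κ ρ‖ ≤ 2 * (1 + |κ|) / (|B| * a) := by
  have hpos : ∀ x ∈ Set.Icc a b, 0 < x := fun x hx => ha.trans_le hx.1
  have hexponent : -1 + I * (κ : ℂ) ≠ 0 := fun h => by simpa using congrArg re h
  have hboundary : ‖(b : ℂ) ^ (-1 + I * (κ : ℂ))‖ = b⁻¹ := by
    simp [norm_cpow_eq_rpow_re_of_pos (ha.trans_le hab), Real.rpow_neg_one]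
  have hderiv_cont : ContinuousOn
      (fun ρ : ℝ => (-1 + I * (κ : ℂ)) * (ρ : ℂ) ^ (-1 + I * (κ : ℂ) - 1)) (Set.Icc a b) :=
    continuousOn_const.mul ((continuousOn_ofReal_cpow_Ioi _).mono hpos)
  have h := norm_intervalIntegral_smul_le_of_norm_primitive_le hab
    ((continuousOn_ofReal_cpow_Ioi _).mono hpos)
    (fun x hx => hasDerivAt_ofReal_cpow_const (ha.trans hx.1).ne' hexponent)
    (hderiv_cont.intervalIntegrable_of_Icc hab)
    (g := fun ρ : ℝ => exp (I * Complex.ofReal (B * ρ))) (by fun_prop)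
    (fun x _ => norm_intervalIntegral_exp_I_mul_le hB a x)
  rw [hboundary] at h
  simp only [oscillatoryKernel, mul_comm (exp _)]
  calc _ ≤ 2 / |B| * ((1 + |κ|) / a) :=
        h.trans (by gcongr; exact inv_add_integral_norm_mul_cpow_le κ ha hab)
    _ = _ := div_mul_div_comm _ _ _ _

theorem norm_mul_integral_oscillatoryKernel_le (B κ : ℝ) {a b : ℝ} (ha : 0 < a) (hab : a ≤ b) :
    ‖(κ : ℂ) * ∫ ρ in a..b, oscillatoryKernel B κ ρ‖ ≤ 4 * (1 + |κ|) ^ 2 := by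
  have hκ : 0 ≤ |κ| := abs_nonneg κ
  rcases le_or_gt (|B| * b) 1 with hb | hb
  · have hlow := norm_mul_integral_oscillatoryKernel_le_one_add B κ ha hab
    nlinarith [mul_nonneg (abs_nonneg B) ha.le]
  have hB : 0 < |B| := pos_of_mul_pos_left (one_pos.trans hb) (ha.trans_le hab).le
  -- The phase `B ρ` starts oscillating at `ρ = |B|⁻¹`, which may lie to the left of `a`.
  obtain ⟨m, ham, hmb, hBm, hBma⟩ :
      ∃ m, a ≤ m ∧ m ≤ b ∧ 1 ≤ |B| * m ∧ |B| * (m - a) ≤ 1 := by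
    refine ⟨max a |B|⁻¹, le_max_left _ _, max_le hab ((inv_le_iff_one_le_mul₀' hB).2 hb.le),
      (inv_le_iff_one_le_mul₀' hB).1 (le_max_right _ _), ?_⟩
    rw [← le_div_iff₀' hB, one_div, sub_le_iff_le_add]
    exact max_le (le_add_of_nonneg_left (by positivity)) (le_add_of_nonneg_right ha.le)
  have hm : 0 < m := ha.trans_le ham
  have hlow : ‖(κ : ℂ) * ∫ ρ in a..m, oscillatoryKernel B κ ρ‖ ≤ 4 :=
    (norm_mul_integral_oscillatoryKernel_le_one_add B κ ha ham).trans (by linarith)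
  have hhigh : ‖(κ : ℂ) * ∫ ρ in m..b, oscillatoryKernel B κ ρ‖ ≤ |κ| * (2 * (1 + |κ|)) := by
    rw [norm_mul, norm_real, Real.norm_eq_abs]
    gcongr
    exact (norm_integral_oscillatoryKernel_le_div (abs_pos.1 hB) κ hm hmb).trans
      (div_le_self (by positivity) hBm)
  have hintegrable : ∀ c d, 0 < c → c ≤ d →
      IntervalIntegrable (oscillatoryKernel B κ) volume c d := fun c d hc hcd =>
    ((continuousOn_oscillatoryKernel B κ).mono
      fun x hx => hc.trans_le hx.1).intervalIntegrable_of_Icc hcd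
  rw [← intervalIntegral.integral_add_adjacent_intervals (hintegrable a m ha ham)
    (hintegrable m b hm hmb), mul_add]
  calc _ ≤ 4 + |κ| * (2 * (1 + |κ|)) := norm_add_le_of_le hlow hhigh
    _ ≤ 4 * (1 + |κ|) ^ 2 := by nlinarith

theorem weighted_oscillatory_with_amplitude_general {ψ ψ' : ℝ → ℂ} {R : ℝ} (B κ : ℝ) (hR : 0 < R)
    (hψ : ContinuousOn ψ (Set.Ioc 0 R)) (hψ' : ∀ ρ ∈ Set.Ioo 0 R, HasDerivAt ψ (ψ' ρ) ρ)
    (hψ'_int : IntervalIntegrable ψ' volume 0 R)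
    (hint : IntervalIntegrable (fun ρ => ψ ρ * oscillatoryKernel B κ ρ) volume 0 R) :
    ‖(κ : ℂ) * ∫ ρ in (0 : ℝ)..R, ψ ρ * oscillatoryKernel B κ ρ‖ ≤
      4 * (1 + |κ|) ^ 2 * (‖ψ R‖ + ∫ ρ in (0 : ℝ)..R, ‖ψ' ρ‖) := by
  have hmul : ∀ ρ, (κ : ℂ) * (ψ ρ * oscillatoryKernel B κ ρ) =
      ψ ρ • ((κ : ℂ) * oscillatoryKernel B κ ρ) := fun ρ => mul_left_comm _ _ _
  have hkernel : ContinuousOn (fun ρ => (κ : ℂ) * oscillatoryKernel B κ ρ) (Set.Ioc 0 R) :=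
    continuousOn_const.mul ((continuousOn_oscillatoryKernel B κ).mono Set.Ioc_subset_Ioi_self)
  have hint' := hint.const_mul (κ : ℂ)
  rw [← intervalIntegral.integral_const_mul]
  simp only [hmul] at hint' ⊢
  refine norm_intervalIntegral_smul_le_of_forall_Ioc hR hψ hψ' hψ'_int hkernel hint'
    fun c d hc hcd _ => ?_
  rw [intervalIntegral.integral_const_mul]
  exact norm_mul_integral_oscillatoryKernel_le B κ hc hcd

theorem continuous_mul_of_tsupport_subset {X A : Type*} [TopologicalSpace X] [TopologicalSpace A]
    [MulZeroClass A] [ContinuousMul A] {f g : X → A} {s : Set X} (hs : IsOpen s)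
    (hf : Continuous f) (hfs : tsupport f ⊆ s) (hg : ContinuousOn g s) :
    Continuous fun x => f x * g x :=
  (hf.continuousOn.mul hg).continuous_of_tsupport_subset hs (tsupport_mul_subset_left.trans hfs)

theorem norm_add_intervalIntegral_norm_deriv_le {E : Type*} [NormedAddCommGroup E]
    [NormedSpace ℝ E] {ψ : ℝ → E} (hψ : ContDiff ℝ 1 ψ) (hc : HasCompactSupport ψ) {a b : ℝ}
    (hab : a ≤ b) :
    ‖ψ b‖ + (∫ ρ in a..b, ‖deriv ψ ρ‖) ≤ (∫ ρ, ‖deriv ψ ρ‖) + ⨆ ρ, ‖ψ ρ‖ := by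
  have hderiv : Integrable (deriv ψ) :=
    (hψ.continuous_deriv le_rfl).integrable_of_hasCompactSupport hc.deriv
  rw [add_comm, intervalIntegral.integral_of_le hab]
  exact add_le_add (setIntegral_le_integral hderiv.norm (.of_forall fun _ => norm_nonneg _))
    (le_ciSup (hψ.continuous.norm.bddAbove_range_of_hasCompactSupport hc.norm) b)

theorem norm_mul_integral_mul_oscillatoryKernel_le_of_hasCompactSupport {ψ : ℝ → ℂ} {R : ℝ}
    (B κ : ℝ) (hR : 0 < R) (hψ : ContDiff ℝ 1 ψ) (hc : HasCompactSupport ψ)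
    (hs : tsupport ψ ⊆ Set.Ioi 0) :
    ‖(κ : ℂ) * ∫ ρ in (0 : ℝ)..R, ψ ρ * oscillatoryKernel B κ ρ‖ ≤
      4 * (1 + |κ|) ^ 2 * ((∫ ρ, ‖deriv ψ ρ‖) + ⨆ ρ, ‖ψ ρ‖) := by
  have hcont : Continuous fun ρ => ψ ρ * oscillatoryKernel B κ ρ :=
    continuous_mul_of_tsupport_subset isOpen_Ioi hψ.continuous hs
      (continuousOn_oscillatoryKernel B κ)
  calc _ ≤ 4 * (1 + |κ|) ^ 2 * (‖ψ R‖ + ∫ ρ in (0 : ℝ)..R, ‖deriv ψ ρ‖) :=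
        weighted_oscillatory_with_amplitude_general B κ hR hψ.continuous.continuousOn
          (fun ρ _ => (hψ.differentiable one_ne_zero ρ).hasDerivAt)
          ((hψ.continuous_deriv le_rfl).intervalIntegrable 0 R) (hcont.intervalIntegrable 0 R)
    _ ≤ _ := mul_le_mul_of_nonneg_left
        (norm_add_intervalIntegral_norm_deriv_le hψ hc hR.le) (by positivity)

/-- If `ψ : (0,∞) → ℂ` is `C¹` with compact support in `(0,∞)`, then for all `R > 0`,
`A ≥ 0` and `κ ∈ ℝ`,
`|κ ∫_0^R ψ(ρ) e^{±iAρ} ρ^{-1+iκ} dρ| ≤ C (1+|κ|)^2 (‖ψ'‖_{L¹} + ‖ψ‖_{L^∞})`,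
where `C` is the absolute constant from the unweighted estimate
`|κ ∫_ε^R e^{±iAρ} ρ^{-1+iκ} dρ| ≤ C (1+|κ|)^2`. -/
theorem weighted_oscillatory_with_amplitude :
    ∃ C : ℝ, 0 < C ∧
      (∀ (κ ε R A s : ℝ), 0 < ε → ε ≤ R → 0 ≤ A → (s = 1 ∨ s = -1) →
        ‖(κ : ℂ) * ∫ ρ in ε..R,
            Complex.exp (Complex.I * Complex.ofReal (s * A * ρ)) *
              (ρ : ℂ) ^ ((-1 : ℂ) + Complex.I * (κ : ℂ))‖
          ≤ C * (1 + |κ|) ^ 2) ∧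
      ∀ (ψ : ℝ → ℂ), ContDiff ℝ 1 ψ → HasCompactSupport ψ → tsupport ψ ⊆ Set.Ioi 0 →
        ∀ (R A κ s : ℝ), 0 < R → 0 ≤ A → (s = 1 ∨ s = -1) →
          ‖(κ : ℂ) * ∫ ρ in (0 : ℝ)..R,
              ψ ρ * Complex.exp (Complex.I * Complex.ofReal (s * A * ρ)) *
                (ρ : ℂ) ^ ((-1 : ℂ) + Complex.I * (κ : ℂ))‖
            ≤ C * (1 + |κ|) ^ 2 * ((∫ ρ : ℝ, ‖deriv ψ ρ‖) + ⨆ ρ : ℝ, ‖ψ ρ‖) := by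
  refine ⟨4, by norm_num, fun κ ε R A s hε hεR _ _ =>
    norm_mul_integral_oscillatoryKernel_le (s * A) κ hε hεR, fun ψ hψ hc hs R A κ s hR _ _ => ?_⟩
  simp only [mul_assoc (ψ _)]
  exact norm_mul_integral_mul_oscillatoryKernel_le_of_hasCompactSupport (s * A) κ hR hψ hc hs
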